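/- Let G₁ be an r₁-regular graph on n₁ vertices and m₁ edges, let p,q ≥ 1 be integers, let G₂ = K_{p,q}, and let α ∈ [0,1]. (1) If r₁ = 1, then the A_α-spectrum of the R-vertex join G₁⟨v⟩G₂ consists precisely of: α(3+p+q) − 1; α(2+p) repeated q−1 times; α(2+q) repeated p−1 times; and the four roots of F(x) = (x² − (3α+αp+αq+1)x + 2α²p + 2α²q + 6α − 2)·(x² − (4α+αp+αq)x + 4α² + 2α²p + 2α²q + 2αpq − pq) − 2(1−α)²(x−2α)((x−2α)(p+q) − α(p+q)² + 2pq). (2) If r₁ ≥ 2, then the A_α-spectrum of G₁⟨v⟩G₂ consists precisely of: 2α repeated m₁−n₁ times; α(n₁+p) repeated q−1 times; α(n₁+q) repeated p−1 times; the two roots of G_i(x) = x² − (2α+αr₁+αp+αq+λ_i(A_α(G₁)))x + 2α²p + 2α²q + 3αr₁ − r₁ + (3α−1)λ_i(A_α(G₁)) for each i = 2,…,n₁; and the four roots of F(x) = (x² − (2α+αr₁+αp+αq+r₁)x + 2α²p + 2α²q + 6αr₁ − 2r₁)·(x² − (2αn₁+αp+αq)x + α²n₁² + α²n₁p + α²n₁q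 + 2αpq − pq) − n₁(1−α)²(x−2α)((x−αn₁)(p+q) − α(p+q)² + 2pq). -/

import Mathlib

/-!
Order the vertices of `G₁⟨v⟩G₂` as `V(G₁)`, `E(G₁)`, `V(G₂)`. Then `A_α` has two diagonal blocks,
belonging to `R(G₁)` and to `G₂`, coupled by a matrix of rank one, so its characteristic polynomial
is the product of those of the two blocks minus the product of two coronals `uᵀ adj(x - M) u`.

On `E(G₁)` the first block is the scalar `2α`. Taking the Schur complement there, and using that
the incidence matrix `B` of a regular graph satisfies `B Bᵀ = r + A`, leaves a linear pencil in
`A_α(G₁)`, whose determinant is a product of quadratics over the eigenvalues `μᵢ`. Both coronals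
are found by solving `(x - M) y = u` within vectors that are constant on vertices and on edges, or
on the two parts of `K_{p,q}`. These vectors only see the eigenvalue `r` of `A_α(G₁)`, whence the
quartic. Identities carry a factor `(x - 2α)^n₁` throughout so that no division by `x - 2α` is
needed.
-/

open Matrix Polynomial
open scoped Classical

noncomputable section

/-- `A_α(G) = α·D(G) + (1-α)·A(G)`, where `D(G)` is the diagonal degree matrix and
`A(G)` the adjacency matrix. -/
def Aalpha {V : Type*} [Fintype V] (G : SimpleGraph V) (α : ℝ) : Matrix V V ℝ :=
  α • Matrix.diagonal (fun v => (G.degree v : ℝ)) + (1 - α) • G.adjMatrix ℝ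

/-- The `R`-vertex join `G₁⟨v⟩G₂`: take the `R`-graph `R(G₁)` (for each edge of `G₁` a
new vertex joined to both of its endpoints) together with `G₂`, and join every original
vertex of `G₁` with every vertex of `G₂`. -/
def rVertexJoin {V₁ V₂ : Type*} (G₁ : SimpleGraph V₁) (G₂ : SimpleGraph V₂) :
    SimpleGraph (V₁ ⊕ (↥G₁.edgeSet ⊕ V₂)) :=
  SimpleGraph.fromRel fun a b =>
    match a, b with
    | Sum.inl v, Sum.inl w => G₁.Adj v w
    | Sum.inl v, Sum.inr (Sum.inl e) => v ∈ (e : Sym2 V₁)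
    | Sum.inl _, Sum.inr (Sum.inr _) => True
    | Sum.inr (Sum.inr u), Sum.inr (Sum.inr w) => G₂.Adj u w
    | _, _ => False

section Determinants

variable {m n R : Type*} [Fintype m] [Fintype n] [DecidableEq m] [DecidableEq n] [CommRing R]

lemma mul_dotProduct_adjugate_mulVec {A : Matrix n n R} {s : R} {y u : n → R}
    (h : A *ᵥ y = s • u) (z : n → R) :
    s * (z ⬝ᵥ A.adjugate *ᵥ u) = A.det * (z ⬝ᵥ y) := by
  rw [← smul_eq_mul, ← dotProduct_smul, ← mulVec_smul, ← h, mulVec_mulVec, adjugate_mul,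
    smul_mulVec, one_mulVec, dotProduct_smul, smul_eq_mul]

lemma det_sub_vecMulVec {A : Matrix n n R} (hA : IsLeftRegular A.det) (u z : n → R) :
    (A - vecMulVec u z).det = A.det - z ⬝ᵥ A.adjugate *ᵥ u := by
  have hmul : fromBlocks A (replicateCol Unit u) (replicateRow Unit z) 1 *
      fromBlocks 1 (-replicateCol Unit (A.adjugate *ᵥ u)) 0 (A.det • 1) =
      fromBlocks A 0 (replicateRow Unit z) ((A.det - z ⬝ᵥ A.adjugate *ᵥ u) • 1) := by
    have hA' : A *ᵥ A.adjugate *ᵥ u = A.det • u := by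
      rw [mulVec_mulVec, mul_adjugate, smul_mulVec, one_mulVec]
    rw [fromBlocks_multiply]
    congr 1
    · simp
    · simp [← replicateCol_mulVec, hA']
    · simp
    · ext
      simp [replicateRow_mul_replicateCol_apply]
      ring
  have hdet := congrArg det hmul
  rw [det_mul, det_fromBlocks_one₂₂, ← vecMulVec_eq, det_fromBlocks_zero₂₁,
    det_fromBlocks_zero₁₂] at hdet
  simp only [det_one, one_mul, det_smul, Fintype.card_unit, pow_one, mul_one] at hdet
  exact hA (by simpa only [mul_comm] using hdet)

lemma det_fromBlocks_vecMulVec {A : Matrix m m R} {D : Matrix n n R} (hA : IsLeftRegular A.det)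
    (hD : IsLeftRegular D.det) (u z : m → R) (v w : n → R) :
    (fromBlocks A (vecMulVec u v) (vecMulVec w z) D).det =
      A.det * D.det - (z ⬝ᵥ A.adjugate *ᵥ u) * (v ⬝ᵥ D.adjugate *ᵥ w) := by
  set N : Matrix (m ⊕ n) (m ⊕ n) R := fromBlocks A 0 (vecMulVec w z) D with hN
  have hNdet : N.det = A.det * D.det := det_fromBlocks_zero₁₂ A _ D
  have hNreg : IsLeftRegular N.det := hNdet ▸ hA.mul hD
  have hsplit : fromBlocks A (vecMulVec u v) (vecMulVec w z) D =
      N - vecMulVec (Sum.elim u 0) (Sum.elim 0 (-v)) := by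
    ext (i | i) (j | j) <;> simp [hN, vecMulVec_apply]
  have hsolve : N *ᵥ Sum.elim (D.det • A.adjugate *ᵥ u)
      (-(z ⬝ᵥ A.adjugate *ᵥ u) • D.adjugate *ᵥ w) = (A.det * D.det) • Sum.elim u 0 := by
    have hAu : A *ᵥ A.adjugate *ᵥ u = A.det • u := by
      rw [mulVec_mulVec, mul_adjugate, smul_mulVec, one_mulVec]
    have hDw : D *ᵥ D.adjugate *ᵥ w = D.det • w := by
      rw [mulVec_mulVec, mul_adjugate, smul_mulVec, one_mulVec]
    rw [hN, fromBlocks_mulVec]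
    ext (i | i)
    · simp [-mulVec_mulVec, mulVec_smul, hAu]
      ring
    · simp [-mulVec_mulVec, mulVec_smul, mulVec_neg, hDw, vecMulVec_mulVec]
      ring
  have hcoronal := mul_dotProduct_adjugate_mulVec hsolve (Sum.elim 0 (-v))
  rw [hNdet] at hcoronal
  rw [hsplit, det_sub_vecMulVec hNreg, hNdet, (hA.mul hD) hcoronal]
  simp [sumElim_dotProduct_sumElim]

lemma pow_mul_det_fromBlocks_smul_one (A : Matrix m m R) (B : Matrix m n R) (C : Matrix n m R)
    (t : R) :
    t ^ Fintype.card m * (fromBlocks A B C (t • 1)).det =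
      t ^ Fintype.card n * (t • A - B * C).det := by
  have hmul : fromBlocks A B C (t • 1) * fromBlocks (t • 1) 0 (-C) 1 =
      fromBlocks (t • A - B * C) B 0 (t • 1) := by
    simp [fromBlocks_multiply, sub_eq_add_neg]
  simpa [mul_comm] using congrArg det hmul

end Determinants

lemma det_smul_one_sub_smul {n K : Type*} [Fintype n] [DecidableEq n] [Field K]
    {M : Matrix n n K} {μ : n → K} (hμ : M.charpoly = ∏ i, (X - C (μ i))) (a b : K) :
    (a • (1 : Matrix n n K) - b • M).det = ∏ i, (a - b * μ i) := by
  obtain rfl | hb := eq_or_ne b 0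
  · simp
  · have hscale : a • (1 : Matrix n n K) - b • M = b • (scalar n (a / b) - M) := by
      rw [smul_sub, scalar_apply, ← smul_one_eq_diagonal, smul_smul, mul_div_cancel₀ _ hb]
    rw [hscale, det_smul, ← eval_charpoly, hμ, eval_prod, ← Finset.card_univ, ← Finset.prod_const,
      ← Finset.prod_mul_distrib]
    refine Finset.prod_congr rfl fun i _ => ?_
    rw [eval_sub, eval_X, eval_C, mul_sub, mul_div_cancel₀ _ hb]

lemma det_smul_one_sub_smul_map_C {n K : Type*} [Fintype n] [DecidableEq n] [Field K] [Infinite K]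
    {M : Matrix n n K} {μ : n → K} (hμ : M.charpoly = ∏ i, (X - C (μ i))) (a b : K[X]) :
    (a • (1 : Matrix n n K[X]) - b • M.map C).det = ∏ i, (a - b * C (μ i)) := by
  refine Polynomial.funext fun x => ?_
  have hmap : (evalRingHom x).mapMatrix (a • (1 : Matrix n n K[X]) - b • M.map C) =
      a.eval x • (1 : Matrix n n K) - b.eval x • M := by
    ext i j
    simp [Matrix.one_apply, apply_ite]
  rw [← coe_evalRingHom, RingHom.map_det, hmap, det_smul_one_sub_smul hμ]
  simp

lemma exists_eq_of_mulVec_eq_smul {n R : Type*} [Fintype n] [DecidableEq n] [CommRing R]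
    [IsDomain R] {M : Matrix n n R} {μ : n → R} (hμ : M.charpoly = ∏ i, (X - C (μ i)))
    {v : n → R} (hv : v ≠ 0) {a : R} (h : M *ᵥ v = a • v) : ∃ i, μ i = a := by
  have hdet : (scalar n a - M).det = 0 := by
    refine exists_mulVec_eq_zero_iff.mp ⟨v, hv, ?_⟩
    rw [sub_mulVec, h, scalar_apply, ← smul_one_eq_diagonal, smul_mulVec, one_mulVec, sub_self]
  rw [← eval_charpoly, hμ, eval_prod, Finset.prod_eq_zero_iff] at hdet
  obtain ⟨i, -, hi⟩ := hdet
  exact ⟨i, by simpa [sub_eq_zero, eq_comm] using hi⟩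

lemma le_of_isRoot_charpoly_of_mulVec_one_le {n : Type*} [Fintype n] [DecidableEq n]
    {M : Matrix n n ℝ} (hM : ∀ i j, 0 ≤ M i j) {r x : ℝ} (hrow : ∀ i, (M *ᵥ 1) i ≤ r)
    (hx : M.charpoly.IsRoot x) : x ≤ r := by
  have heigen : Module.End.HasEigenvalue (toLin' M) x := by
    rw [Module.End.hasEigenvalue_iff_isRoot_charpoly]
    simpa using hx
  obtain ⟨k, hk⟩ := eigenvalue_mem_ball heigen
  rw [Metric.mem_closedBall, Real.dist_eq] at hk
  simp_rw [Real.norm_eq_abs, abs_of_nonneg (hM k _)] at hk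
  have hsum : (M *ᵥ 1) k = M k k + ∑ j ∈ Finset.univ.erase k, M k j := by
    simp [mulVec, dotProduct]
  linarith [le_abs_self (x - M k k), hrow k]

lemma sum_eq_trace_of_charpoly_eq_prod {n R : Type*} [Fintype n] [DecidableEq n] [CommRing R]
    {M : Matrix n n R} {μ : n → R} (hμ : M.charpoly = ∏ i, (X - C (μ i))) :
    ∑ i, μ i = M.trace := by
  nontriviality R
  rw [trace_eq_neg_charpoly_nextCoeff, hμ, prod_X_sub_C_nextCoeff, neg_neg]

section Charpoly

variable {m n R : Type*} [Fintype m] [Fintype n] [CommRing R]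

lemma map_C_mulVec_const {l : Type*} (M : Matrix l n R) (f : R[X]) :
    M.map C *ᵥ (fun _ => f) = fun i => C ((M *ᵥ 1) i) * f := by
  ext1 i
  simp [mulVec, dotProduct, Finset.sum_mul]

variable [DecidableEq m] [DecidableEq n]

lemma charmatrix_mulVec_const (M : Matrix n n R) (f : R[X]) :
    charmatrix M *ᵥ (fun _ => f) = fun i => (X - C ((M *ᵥ 1) i)) * f := by
  ext1 i
  simp [charmatrix, mulVec, dotProduct, diagonal_apply, ← Finset.sum_mul, sub_mul]

/-- The numerator of the coronal `Γ_M(x) = 1ᵀ(x - M)⁻¹1` of `M`, whose denominator is the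
characteristic polynomial. Using the adjugate in place of the inverse keeps it a polynomial. -/
def coronalNum (M : Matrix n n R) : R[X] := 1 ⬝ᵥ (charmatrix M).adjugate *ᵥ 1

lemma charpoly_fromBlocks_vecMulVec (A : Matrix m m R) (D : Matrix n n R) (u z : m → R)
    (v w : n → R) :
    (fromBlocks A (vecMulVec u v) (vecMulVec w z) D).charpoly =
      A.charpoly * D.charpoly - ((C ∘ z) ⬝ᵥ (charmatrix A).adjugate *ᵥ (C ∘ u)) *
        ((C ∘ v) ⬝ᵥ (charmatrix D).adjugate *ᵥ (C ∘ w)) := by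
  have huv : (vecMulVec u v).map C = vecMulVec (C ∘ u) (C ∘ v) := by ext; simp [vecMulVec_apply]
  have hwz : (vecMulVec w z).map C = vecMulVec (C ∘ w) (C ∘ z) := by ext; simp [vecMulVec_apply]
  rw [charpoly, charmatrix_fromBlocks, huv, hwz, ← neg_vecMulVec, ← neg_vecMulVec,
    det_fromBlocks_vecMulVec A.charpoly_monic.isRegular.left D.charpoly_monic.isRegular.left]
  simp [mulVec_neg, charpoly]

/-- The matrix of a weighted complete bipartite graph: weight `c` on every edge between `m` and `n`,
weight `a` on the loops of `m` and weight `b` on the loops of `n`. -/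
def bipartiteBlocks (m n : Type*) [Fintype m] [Fintype n] [DecidableEq m] [DecidableEq n]
    (a b c : R) : Matrix (m ⊕ n) (m ⊕ n) R :=
  fromBlocks (scalar m a) (of fun _ _ => c) (of fun _ _ => c) (scalar n b)

lemma const_dotProduct_adjugate_charmatrix_scalar_mulVec_const (a b d : R) :
    (C ∘ fun _ => d) ⬝ᵥ (charmatrix (scalar n a)).adjugate *ᵥ (C ∘ fun _ => b) =
      (X - C a) ^ (Fintype.card n - 1) * C (d * b * Fintype.card n) := by
  rw [scalar_apply, charmatrix_diagonal, ← smul_one_eq_diagonal, adjugate_smul]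
  simp [smul_mulVec, dotProduct]
  ring

lemma charpoly_bipartiteBlocks [Nonempty m] [Nonempty n] (a b c : R) :
    (bipartiteBlocks m n a b c).charpoly =
      (X - C a) ^ (Fintype.card m - 1) * (X - C b) ^ (Fintype.card n - 1) *
        ((X - C a) * (X - C b) - C (c ^ 2 * Fintype.card m * Fintype.card n)) := by
  have hblocks : bipartiteBlocks m n a b c =
      fromBlocks (scalar m a) (vecMulVec (fun _ => c) fun _ => 1)
        (vecMulVec (fun _ => c) fun _ => 1) (scalar n b) := by
    ext (i | i) (j | j) <;> simp [bipartiteBlocks, vecMulVec_apply]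
  rw [hblocks, charpoly_fromBlocks_vecMulVec,
    const_dotProduct_adjugate_charmatrix_scalar_mulVec_const,
    const_dotProduct_adjugate_charmatrix_scalar_mulVec_const, scalar_apply, scalar_apply,
    charpoly_diagonal, charpoly_diagonal, Finset.prod_const, Finset.prod_const, Finset.card_univ,
    Finset.card_univ, ← pow_sub_one_mul (Fintype.card_ne_zero (α := m)),
    ← pow_sub_one_mul (Fintype.card_ne_zero (α := n))]
  simp
  ring

lemma coronalNum_bipartiteBlocks [Nonempty m] [Nonempty n] (a b c : R) :
    coronalNum (bipartiteBlocks m n a b c) =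
      (X - C a) ^ (Fintype.card m - 1) * (X - C b) ^ (Fintype.card n - 1) *
        (C (Fintype.card m : R) * (X - C b) + C (Fintype.card n : R) * (X - C a) +
          2 * C (c * Fintype.card m * Fintype.card n)) := by
  have hcharpoly := charpoly_bipartiteBlocks (m := m) (n := n) a b c
  set Q : R[X] := (X - C a) * (X - C b) - C (c ^ 2 * Fintype.card m * Fintype.card n) with hQ
  have hQmonic : Q.Monic :=
    (((monic_X_sub_C a).pow _).mul ((monic_X_sub_C b).pow _)).of_mul_monic_left
      (hcharpoly ▸ charpoly_monic _)
  have hsolve : charmatrix (bipartiteBlocks m n a b c) *ᵥ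
      Sum.elim (fun _ => X - C b + C (c * Fintype.card n))
        (fun _ => X - C a + C (c * Fintype.card m)) = Q • 1 := by
    rw [bipartiteBlocks, charmatrix_fromBlocks, scalar_apply, scalar_apply, charmatrix_diagonal,
      charmatrix_diagonal, fromBlocks_mulVec]
    ext1 (i | i)
    · simp [mulVec, dotProduct, hQ]
      ring
    · simp [mulVec, dotProduct, hQ]
      ring
  have hcoronal := mul_dotProduct_adjugate_mulVec hsolve 1
  refine hQmonic.isRegular.left (hcoronal.trans ?_)
  rw [← charpoly, hcharpoly]
  simp [dotProduct]
  ring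

end Charpoly

section Incidence

variable {V : Type*} [DecidableEq V] (G : SimpleGraph V)

/-- The vertex-edge incidence matrix of `G` with columns indexed by the edges of `G` only, whereas
`SimpleGraph.incMatrix` has a column for every unordered pair of vertices. -/
def edgeIncMatrix : Matrix V G.edgeSet ℝ := (G.incMatrix ℝ).submatrix id Subtype.val

lemma edgeIncMatrix_apply (v : V) (e : G.edgeSet) :
    edgeIncMatrix G v e = if v ∈ (e : Sym2 V) then 1 else 0 := by
  simp [edgeIncMatrix, SimpleGraph.incMatrix_apply', SimpleGraph.incidenceSet]

variable [Fintype V]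

lemma one_vecMul_edgeIncMatrix : 1 ᵥ* edgeIncMatrix G = fun _ => 2 := by
  ext e
  simpa [vecMul, dotProduct, edgeIncMatrix] using
    G.sum_incMatrix_apply_of_mem_edgeSet (R := ℝ) e.2

lemma edgeIncMatrix_mul_transpose :
    edgeIncMatrix G * (edgeIncMatrix G)ᵀ =
      diagonal (fun v => (G.degree v : ℝ)) + G.adjMatrix ℝ := by
  have hinc : edgeIncMatrix G * (edgeIncMatrix G)ᵀ = G.incMatrix ℝ * (G.incMatrix ℝ)ᵀ := by
    ext v w
    simp only [mul_apply, edgeIncMatrix, submatrix_apply, transpose_apply, id]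
    refine Finset.sum_of_injOn (fun e : G.edgeSet => (e : Sym2 V)) Subtype.val_injective.injOn
      (by simp) (fun e _ he => ?_) fun _ _ => rfl
    have : e ∉ G.incidenceSet v := fun h => he (by simpa using h.1)
    rw [G.incMatrix_of_notMem_incidenceSet this, zero_mul]
  rw [hinc, G.incMatrix_mul_transpose]
  ext v w
  obtain rfl | hvw := eq_or_ne v w
  · simp
  · simp [hvw]

lemma edgeIncMatrix_mulVec_one : edgeIncMatrix G *ᵥ 1 = fun v => (G.degree v : ℝ) := by
  ext v
  have h := congrFun (congrFun (edgeIncMatrix_mul_transpose G) v) v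
  have hsq (e) : edgeIncMatrix G v e * edgeIncMatrix G v e = edgeIncMatrix G v e := by
    simp [edgeIncMatrix_apply]
  simpa [mul_apply, mulVec, dotProduct, hsq] using h

end Incidence

section Join

variable {V W : Type*} (G : SimpleGraph V) (H : SimpleGraph W)

lemma adjMatrix_rVertexJoin [DecidableEq V] :
    ((rVertexJoin G H).adjMatrix ℝ).submatrix (Equiv.sumAssoc _ _ _) (Equiv.sumAssoc _ _ _) =
      fromBlocks (fromBlocks (G.adjMatrix ℝ) (edgeIncMatrix G) (edgeIncMatrix G)ᵀ 0)
        (vecMulVec (Sum.elim 1 0) 1) (vecMulVec 1 (Sum.elim 1 0)) (H.adjMatrix ℝ) := by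
  have hG (v w) : (¬v = w ∧ (G.Adj v w ∨ G.Adj w v)) ↔ G.Adj v w := by
    rw [G.adj_comm w v, or_self, and_iff_right_of_imp SimpleGraph.Adj.ne]
  have hH (x y) : (¬x = y ∧ (H.Adj x y ∨ H.Adj y x)) ↔ H.Adj x y := by
    rw [H.adj_comm y x, or_self, and_iff_right_of_imp SimpleGraph.Adj.ne]
  ext ((v | e) | x) ((w | f) | y) <;>
    rw [submatrix_apply, SimpleGraph.adjMatrix_apply] <;>
    simp [rVertexJoin, edgeIncMatrix_apply, hG, hH]

variable [Fintype V] [Fintype W]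

lemma degree_rVertexJoin :
    (fun x => ((rVertexJoin G H).degree (Equiv.sumAssoc _ _ _ x) : ℝ)) =
      Sum.elim (Sum.elim (fun v => 2 * (G.degree v : ℝ) + Fintype.card W) fun _ => 2)
        fun x => (H.degree x : ℝ) + Fintype.card V := by
  classical
  have hdegree : (fun x => ((rVertexJoin G H).degree (Equiv.sumAssoc _ _ _ x) : ℝ)) =
      ((rVertexJoin G H).adjMatrix ℝ).submatrix (Equiv.sumAssoc _ _ _) (Equiv.sumAssoc _ _ _) *ᵥ
        1 := by
    ext x
    simp [submatrix_mulVec_equiv]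
  rw [hdegree, adjMatrix_rVertexJoin, fromBlocks_mulVec, fromBlocks_mulVec,
    vecMulVec_mulVec, vecMulVec_mulVec]
  ext ((v | e) | x)
  · simp [edgeIncMatrix_mulVec_one, two_mul]
  · simp [mulVec_transpose, one_vecMul_edgeIncMatrix]
  · simp [dotProduct, add_comm]

variable [DecidableEq V]

/-- The principal block of `A_α(G⟨v⟩H)` on the vertices of `R(G)`, where `k` is the number of
vertices of `H`. -/
def rGraphBlock (α k : ℝ) : Matrix (V ⊕ G.edgeSet) (V ⊕ G.edgeSet) ℝ :=
  fromBlocks (Aalpha G α + diagonal fun v => α * (G.degree v + k))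
    ((1 - α) • edgeIncMatrix G) ((1 - α) • (edgeIncMatrix G)ᵀ) (scalar _ (2 * α))

lemma Aalpha_rVertexJoin [DecidableEq W] (α : ℝ) :
    (Aalpha (rVertexJoin G H) α).submatrix (Equiv.sumAssoc _ _ _) (Equiv.sumAssoc _ _ _) =
      fromBlocks (rGraphBlock G α (Fintype.card W))
        (vecMulVec (Sum.elim (fun _ => 1 - α) 0) 1) (vecMulVec 1 (Sum.elim (fun _ => 1 - α) 0))
        (Aalpha H α + scalar W (α * Fintype.card V)) := by
  have hdegree (x) := congrFun (degree_rVertexJoin G H) x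
  have hadj (x y) := congrFun (congrFun (adjMatrix_rVertexJoin G H) x) y
  simp only [submatrix_apply] at hadj
  ext x y
  simp only [Aalpha, submatrix_apply, Matrix.add_apply, Matrix.smul_apply, hadj, diagonal_apply,
    hdegree, EmbeddingLike.apply_eq_iff_eq]
  obtain (v | e) | x := x <;> obtain (w | f) | y := y <;>
    simp [rGraphBlock, Aalpha, diagonal_apply]
  all_goals split_ifs <;> ring

end Join

section RegularJoin

variable {V : Type*} [Fintype V]

lemma Aalpha_mulVec_one (G : SimpleGraph V) (α : ℝ) :
    Aalpha G α *ᵥ 1 = fun v => (G.degree v : ℝ) := by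
  ext v
  simp [Aalpha, add_mulVec, smul_mulVec, mulVec_diagonal]
  ring

/-- The quadratic factor that an eigenvalue `μ` of `A_α(G)`, with `G` regular of degree `r`,
contributes to the spectrum of the `R`-vertex join of `G` with a graph on `k` vertices. -/
def joinQuadratic (α r k μ : ℝ) : ℝ[X] :=
  X ^ 2 - C (2 * α + α * r + α * k + μ) * X +
    C (2 * α ^ 2 * k + 3 * α * r - r + (3 * α - 1) * μ)

lemma joinQuadratic_eq (α r k μ : ℝ) :
    joinQuadratic α r k μ =
      ((X - C (2 * α)) * (X - C (α * (r + k))) - C ((1 - α) * (1 - 2 * α) * r)) -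
        (X - C (2 * α) + C (1 - α)) * C μ := by
  refine Polynomial.funext fun x => ?_
  simp [joinQuadratic]
  ring

lemma monic_joinQuadratic (α r k μ : ℝ) : (joinQuadratic α r k μ).Monic := by
  rw [joinQuadratic, sub_add]
  refine monic_X_pow_sub ?_
  compute_degree!

variable [DecidableEq V] {G : SimpleGraph V} {r : ℕ} {α : ℝ} {μ : V → ℝ}

lemma pow_mul_charpoly_rGraphBlock (hreg : G.IsRegularOfDegree r)
    (hμ : (Aalpha G α).charpoly = ∏ i, (X - C (μ i))) (k : ℝ) :
    (X - C (2 * α)) ^ Fintype.card V * (rGraphBlock G α k).charpoly =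
      (X - C (2 * α)) ^ Fintype.card G.edgeSet * ∏ i, joinQuadratic α r k (μ i) := by
  have hschur : (X - C (2 * α)) •
        charmatrix (Aalpha G α + diagonal fun v => α * (G.degree v + k)) -
      -((1 - α) • edgeIncMatrix G).map C * -((1 - α) • (edgeIncMatrix G)ᵀ).map C =
      ((X - C (2 * α)) * (X - C (α * (r + k))) - C ((1 - α) * (1 - 2 * α) * r)) •
        (1 : Matrix V V ℝ[X]) - (X - C (2 * α) + C (1 - α)) • (Aalpha G α).map C := by
    rw [Matrix.neg_mul, Matrix.mul_neg, neg_neg, ← Matrix.map_mul, Matrix.smul_mul,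
      Matrix.mul_smul, edgeIncMatrix_mul_transpose]
    ext1 v w
    obtain rfl | hvw := eq_or_ne v w
    · simp [Aalpha, hreg.degree_eq, map_ofNat C]
      ring
    · by_cases hadj : G.Adj v w
      · simp [Aalpha, hvw, hadj]
        ring
      · simp [Aalpha, hvw, hadj]
  rw [charpoly, rGraphBlock, charmatrix_fromBlocks, scalar_apply, charmatrix_diagonal,
    ← smul_one_eq_diagonal, pow_mul_det_fromBlocks_smul_one, hschur,
    det_smul_one_sub_smul_map_C hμ]
  simp_rw [joinQuadratic_eq]

lemma joinQuadratic_mul_dotProduct_adjugate_charmatrix_rGraphBlock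
    (hreg : G.IsRegularOfDegree r) (k : ℝ) :
    joinQuadratic α r k r * ((C ∘ Sum.elim (fun _ => 1 - α) 0) ⬝ᵥ
        (charmatrix (rGraphBlock G α k)).adjugate *ᵥ (C ∘ Sum.elim (fun _ => 1 - α) 0)) =
      (rGraphBlock G α k).charpoly *
        (C (Fintype.card V * (1 - α) ^ 2) * (X - C (2 * α))) := by
  have hsolve : charmatrix (rGraphBlock G α k) *ᵥ
      Sum.elim (fun _ => (X - C (2 * α)) * C (1 - α)) (fun _ => C (2 * (1 - α) ^ 2)) =
      joinQuadratic α r k r • (C ∘ Sum.elim (fun _ => 1 - α) 0) := by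
    rw [rGraphBlock, charmatrix_fromBlocks, fromBlocks_mulVec]
    simp only [Sum.elim_comp_inl, Sum.elim_comp_inr, charmatrix_mulVec_const, neg_mulVec,
      map_C_mulVec_const, add_mulVec, smul_mulVec, Aalpha_mulVec_one, edgeIncMatrix_mulVec_one,
      mulVec_transpose, one_vecMul_edgeIncMatrix, joinQuadratic_eq]
    ext1 (v | e)
    · simp [hreg.degree_eq, mulVec_diagonal, map_ofNat C]
      ring
    · simp [mulVec_diagonal]
      ring
  have h := mul_dotProduct_adjugate_mulVec hsolve (C ∘ Sum.elim (fun _ => 1 - α) 0)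
  rw [h, ← charpoly]
  congr 1
  simp [dotProduct]
  ring

lemma pow_mul_charpoly_rVertexJoin {W : Type*} [Fintype W] [DecidableEq W] (H : SimpleGraph W)
    (hreg : G.IsRegularOfDegree r) (hμ : (Aalpha G α).charpoly = ∏ i, (X - C (μ i))) {i₀ : V}
    (hi₀ : μ i₀ = r) :
    (X - C (2 * α)) ^ Fintype.card V * (Aalpha (rVertexJoin G H) α).charpoly =
      (X - C (2 * α)) ^ Fintype.card G.edgeSet *
        (∏ i ∈ Finset.univ.erase i₀, joinQuadratic α r (Fintype.card W) (μ i)) *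
        (joinQuadratic α r (Fintype.card W) r *
            (Aalpha H α + scalar W (α * Fintype.card V)).charpoly -
          C (Fintype.card V * (1 - α) ^ 2) * (X - C (2 * α)) *
            coronalNum (Aalpha H α + scalar W (α * Fintype.card V))) := by
  set t : ℝ[X] := X - C (2 * α)
  set N := Aalpha H α + scalar W (α * Fintype.card V)
  set Γ := (C ∘ Sum.elim (fun _ => 1 - α) 0) ⬝ᵥ
    (charmatrix (rGraphBlock G α (Fintype.card W))).adjugate *ᵥ (C ∘ Sum.elim (fun _ => 1 - α) 0)
  have hblock := pow_mul_charpoly_rGraphBlock hreg hμ (Fintype.card W)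
  rw [← Finset.mul_prod_erase _ _ (Finset.mem_univ i₀), hi₀] at hblock
  have hΓ := joinQuadratic_mul_dotProduct_adjugate_charmatrix_rGraphBlock (α := α) hreg
    (Fintype.card W)
  have hjoin : (Aalpha (rVertexJoin G H) α).charpoly =
      (rGraphBlock G α (Fintype.card W)).charpoly * N.charpoly - Γ * coronalNum N := by
    have hone : (C ∘ (1 : W → ℝ) : W → ℝ[X]) = 1 := funext fun _ => C_1
    rw [← charpoly_reindex (Equiv.sumAssoc V G.edgeSet W).symm, reindex_apply, Equiv.symm_symm,
      Aalpha_rVertexJoin, charpoly_fromBlocks_vecMulVec, hone, coronalNum]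
  refine (monic_joinQuadratic α r (Fintype.card W) r).isRegular.left ?_
  dsimp only
  rw [hjoin]
  linear_combination (joinQuadratic α r (Fintype.card W) r * N.charpoly -
    C (Fintype.card V * (1 - α) ^ 2) * t * coronalNum N) * hblock -
    t ^ Fintype.card V * coronalNum N * hΓ

end RegularJoin

section CompleteBipartite

variable {P Q : Type*} [Fintype P] [Fintype Q] [DecidableEq P] [DecidableEq Q]

lemma Aalpha_completeBipartiteGraph_add_scalar (α n : ℝ) :
    Aalpha (completeBipartiteGraph P Q) α + scalar (P ⊕ Q) (α * n) =
      bipartiteBlocks P Q (α * (n + Fintype.card Q)) (α * (n + Fintype.card P)) (1 - α) := by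
  have hleft (i : P) : ((completeBipartiteGraph P Q).degree (.inl i) : ℝ) = Fintype.card Q := by
    rw [SimpleGraph.degree_eq_sum_if_adj, Fintype.sum_sum_type]
    simp
  have hright (j : Q) : ((completeBipartiteGraph P Q).degree (.inr j) : ℝ) = Fintype.card P := by
    rw [SimpleGraph.degree_eq_sum_if_adj, Fintype.sum_sum_type]
    simp
  ext (i | i) (j | j) <;>
    simp [Aalpha, bipartiteBlocks, diagonal_apply, hleft, hright]
  all_goals split_ifs <;> ring

/-- The quartic factor of the `A_α`-spectrum of `G⟨v⟩K_{p,q}`, with `G` regular of degree `r` on `n`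
vertices: the characteristic polynomial of `A_α` on the vectors that are constant on `V(G)`, on
`E(G)` and on each part of `K_{p,q}`. -/
def joinQuartic (α r n p q : ℝ) : ℝ[X] :=
  joinQuadratic α r (p + q) r *
      (X ^ 2 - C (2 * α * n + α * p + α * q) * X +
        C (α ^ 2 * n ^ 2 + α ^ 2 * n * p + α ^ 2 * n * q + 2 * α * p * q - p * q)) -
    C (n * (1 - α) ^ 2) * (X - C (2 * α)) *
      (C (p + q) * (X - C (α * n)) - C (α * (p + q) ^ 2) + C (2 * p * q))

lemma pow_mul_charpoly_rVertexJoin_completeBipartiteGraph {V : Type*} [Fintype V] [DecidableEq V]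
    [Nonempty P] [Nonempty Q] {G : SimpleGraph V} {r : ℕ} {α : ℝ} {μ : V → ℝ}
    (hreg : G.IsRegularOfDegree r) (hμ : (Aalpha G α).charpoly = ∏ i, (X - C (μ i))) {i₀ : V}
    (hi₀ : μ i₀ = r) :
    (X - C (2 * α)) ^ Fintype.card V *
        (Aalpha (rVertexJoin G (completeBipartiteGraph P Q)) α).charpoly =
      (X - C (2 * α)) ^ Fintype.card G.edgeSet *
        (X - C (α * (Fintype.card V + Fintype.card P))) ^ (Fintype.card Q - 1) *
        (X - C (α * (Fintype.card V + Fintype.card Q))) ^ (Fintype.card P - 1) *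
        (∏ i ∈ Finset.univ.erase i₀,
          joinQuadratic α r (Fintype.card P + Fintype.card Q) (μ i)) *
        joinQuartic α r (Fintype.card V) (Fintype.card P) (Fintype.card Q) := by
  rw [pow_mul_charpoly_rVertexJoin _ hreg hμ hi₀, Aalpha_completeBipartiteGraph_add_scalar,
    charpoly_bipartiteBlocks, coronalNum_bipartiteBlocks, joinQuartic, Fintype.card_sum,
    Nat.cast_add]
  simp only [map_mul, map_add, map_sub, map_pow, map_one, map_ofNat C]
  ring

end CompleteBipartite

section AalphaSpectrum

variable {V : Type*} [Fintype V] {G : SimpleGraph V} {r : ℕ} {α : ℝ}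

lemma Aalpha_nonneg (G : SimpleGraph V) (hα : α ∈ Set.Icc (0 : ℝ) 1) (v w : V) :
    0 ≤ Aalpha G α v w := by
  have hα₀ : 0 ≤ α := hα.1
  have hα₁ : 0 ≤ 1 - α := sub_nonneg.2 hα.2
  simp only [Aalpha, Matrix.add_apply, Matrix.smul_apply, diagonal_apply,
    SimpleGraph.adjMatrix_apply, smul_eq_mul]
  positivity

lemma trace_Aalpha (G : SimpleGraph V) (α : ℝ) :
    (Aalpha G α).trace = α * ∑ v, (G.degree v : ℝ) := by
  simp [Aalpha, trace_add, trace_smul, trace_diagonal]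

lemma card_mul_eq_two_mul_card_edgeSet (hreg : G.IsRegularOfDegree r) :
    Fintype.card V * r = 2 * Fintype.card G.edgeSet := by
  rw [← SimpleGraph.edgeFinset_card, ← G.sum_degrees_eq_twice_card_edges]
  simp [hreg.degree_eq]

lemma card_eq_two_of_connected_of_isRegularOfDegree_one (hconn : G.Connected)
    (hreg : G.IsRegularOfDegree 1) : Fintype.card V = 2 := by
  have hle := hconn.card_vert_le_card_edgeSet_add_one
  have hedges := card_mul_eq_two_mul_card_edgeSet hreg
  have := hconn.nonempty
  have hpos := Fintype.card_pos (α := V)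
  rw [Nat.card_eq_fintype_card, Nat.card_eq_fintype_card] at hle
  omega

lemma isGreatest_range_of_charpoly_Aalpha [DecidableEq V] [Nonempty V]
    (hreg : G.IsRegularOfDegree r) (hα : α ∈ Set.Icc (0 : ℝ) 1) {μ : V → ℝ}
    (hμ : (Aalpha G α).charpoly = ∏ i, (X - C (μ i))) : IsGreatest (Set.range μ) r := by
  have hone : Aalpha G α *ᵥ 1 = (r : ℝ) • 1 := by
    ext v
    simp [Aalpha_mulVec_one, hreg.degree_eq]
  refine ⟨exists_eq_of_mulVec_eq_smul hμ one_ne_zero hone, ?_⟩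
  rintro _ ⟨i, rfl⟩
  refine le_of_isRoot_charpoly_of_mulVec_one_le (Aalpha_nonneg G hα) (fun v => by simp [hone]) ?_
  rw [hμ, IsRoot.def, eval_prod]
  exact Finset.prod_eq_zero (Finset.mem_univ i) (by simp)

end AalphaSpectrum

lemma joinQuadratic_one (α k : ℝ) :
    joinQuadratic α 1 k (2 * α - 1) = (X - C (2 * α)) * (X - C (α * (3 + k) - 1)) := by
  refine Polynomial.funext fun x => ?_
  simp [joinQuadratic]
  ring

lemma prod_joinQuadratic_of_connected_of_isRegularOfDegree_one {V : Type*} [Fintype V]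
    [DecidableEq V] {G : SimpleGraph V} {α : ℝ} {μ : V → ℝ} (hconn : G.Connected)
    (hreg : G.IsRegularOfDegree 1) (hμ : (Aalpha G α).charpoly = ∏ i, (X - C (μ i))) {i₀ : V}
    (hi₀ : μ i₀ = 1) (k : ℝ) :
    ∏ i ∈ Finset.univ.erase i₀, joinQuadratic α 1 k (μ i) =
      (X - C (2 * α)) * (X - C (α * (3 + k) - 1)) := by
  have hcard := card_eq_two_of_connected_of_isRegularOfDegree_one hconn hreg
  obtain ⟨j, hj⟩ : ∃ j, Finset.univ.erase i₀ = {j} := by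
    simp [← Finset.card_eq_one, hcard]
  have hμj : μ j = 2 * α - 1 := by
    have hsum := sum_eq_trace_of_charpoly_eq_prod hμ
    rw [trace_Aalpha, ← Finset.add_sum_erase _ _ (Finset.mem_univ i₀), hj, hi₀] at hsum
    simp only [Finset.sum_singleton, hreg.degree_eq, Finset.sum_const, Finset.card_univ, hcard,
      Nat.cast_one, nsmul_eq_mul, Nat.cast_ofNat] at hsum
    linarith
  rw [hj, Finset.prod_singleton, hμj, joinQuadratic_one]

theorem Aalpha_spectrum_rVertexJoin_completeBipartite_general {V P Q : Type*} [Fintype V]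
    [Fintype P] [Fintype Q] [DecidableEq V] [DecidableEq P] [DecidableEq Q] [Nonempty P]
    [Nonempty Q] {G : SimpleGraph V} {r : ℕ} {α : ℝ} {μ : V → ℝ} (hreg : G.IsRegularOfDegree r)
    (hμ : (Aalpha G α).charpoly = ∏ i, (X - C (μ i))) {i₀ : V} (hi₀ : μ i₀ = r) :
    (r = 1 → G.Connected →
      (Aalpha (rVertexJoin G (completeBipartiteGraph P Q)) α).charpoly =
        (X - C (α * (3 + Fintype.card P + Fintype.card Q) - 1)) *
        (X - C (α * (2 + Fintype.card P))) ^ (Fintype.card Q - 1) *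
        (X - C (α * (2 + Fintype.card Q))) ^ (Fintype.card P - 1) *
        joinQuartic α 1 2 (Fintype.card P) (Fintype.card Q)) ∧
    (2 ≤ r →
      (Aalpha (rVertexJoin G (completeBipartiteGraph P Q)) α).charpoly =
        (X - C (2 * α)) ^ (Fintype.card G.edgeSet - Fintype.card V) *
        (X - C (α * (Fintype.card V + Fintype.card P))) ^ (Fintype.card Q - 1) *
        (X - C (α * (Fintype.card V + Fintype.card Q))) ^ (Fintype.card P - 1) *
        (∏ i ∈ Finset.univ.erase i₀,
          joinQuadratic α r (Fintype.card P + Fintype.card Q) (μ i)) *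
        joinQuartic α r (Fintype.card V) (Fintype.card P) (Fintype.card Q)) := by
  have hjoin := pow_mul_charpoly_rVertexJoin_completeBipartiteGraph (P := P) (Q := Q) hreg hμ hi₀
  have hedges := card_mul_eq_two_mul_card_edgeSet hreg
  refine ⟨?_, fun hr => ?_⟩
  · rintro rfl hconn
    rw [Nat.cast_one] at hjoin hi₀
    have hcard := card_eq_two_of_connected_of_isRegularOfDegree_one hconn hreg
    have hedge : Fintype.card G.edgeSet = 1 := by omega
    rw [prod_joinQuadratic_of_connected_of_isRegularOfDegree_one hconn hreg hμ hi₀, hcard, hedge,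
      Nat.cast_ofNat, ← add_assoc 3] at hjoin
    refine ((monic_X_sub_C (2 * α)).pow 2).isRegular.left (hjoin.trans ?_)
    ring
  · have hle : Fintype.card V ≤ Fintype.card G.edgeSet := by nlinarith
    refine ((monic_X_sub_C (2 * α)).pow (Fintype.card V)).isRegular.left (hjoin.trans ?_)
    dsimp only
    rw [← pow_mul_pow_sub _ hle]
    ring

lemma joinQuadratic_add (α r p q μ : ℝ) :
    joinQuadratic α r (p + q) μ =
      X ^ 2 - C (2 * α + α * r + α * p + α * q + μ) * X +
        C (2 * α ^ 2 * p + 2 * α ^ 2 * q + 3 * α * r - r + (3 * α - 1) * μ) := by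
  simp only [joinQuadratic, mul_add, add_assoc]

lemma joinQuadratic_add_self (α r p q : ℝ) :
    joinQuadratic α r (p + q) r =
      X ^ 2 - C (2 * α + α * r + α * p + α * q + r) * X +
        C (2 * α ^ 2 * p + 2 * α ^ 2 * q + 6 * α * r - 2 * r) := by
  rw [joinQuadratic_add]
  congr 2
  ring

lemma joinQuartic_one_two (α p q : ℝ) :
    joinQuartic α 1 2 p q =
      (X ^ 2 - C (3 * α + α * p + α * q + 1) * X +
          C (2 * α ^ 2 * p + 2 * α ^ 2 * q + 6 * α - 2)) *
        (X ^ 2 - C (4 * α + α * p + α * q) * X +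
          C (4 * α ^ 2 + 2 * α ^ 2 * p + 2 * α ^ 2 * q + 2 * α * p * q - p * q)) -
      C (2 * (1 - α) ^ 2) * (X - C (2 * α)) *
        (C (p + q) * (X - C (2 * α)) - C (α * (p + q) ^ 2) + C (2 * p * q)) := by
  refine Polynomial.funext fun x => ?_
  simp [joinQuartic, joinQuadratic]
  ring

/-- Corollary: the `A_α`-spectrum (as the factorization of the `A_α`-characteristic
polynomial) of the `R`-vertex join `G₁⟨v⟩K_{p,q}` of an `r₁`-regular graph `G₁` and the
complete bipartite graph `K_{p,q}`, in the cases `r₁ = 1` and `r₁ ≥ 2`. -/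
theorem Aalpha_spectrum_rVertexJoin_completeBipartite
    {n₁ m₁ r₁ p q : ℕ} (hp : 1 ≤ p) (hq : 1 ≤ q)
    (G₁ : SimpleGraph (Fin n₁))
    (hconn₁ : G₁.Connected) (hreg₁ : G₁.IsRegularOfDegree r₁)
    (hm : Fintype.card G₁.edgeSet = m₁)
    (α : ℝ) (hα : α ∈ Set.Icc (0 : ℝ) 1)
    (μ₁ : Fin n₁ → ℝ) (hμ₁ : Antitone μ₁)
    (hμ₁ch : (Aalpha G₁ α).charpoly = ∏ i, (X - C (μ₁ i))) :
    (r₁ = 1 →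
      (Aalpha (rVertexJoin G₁ (completeBipartiteGraph (Fin p) (Fin q))) α).charpoly =
        (X - C (α * (3 + p + q) - 1)) *
        (X - C (α * (2 + p))) ^ (q - 1) *
        (X - C (α * (2 + q))) ^ (p - 1) *
        ((X ^ 2 - C (3 * α + α * p + α * q + 1) * X
            + C (2 * α ^ 2 * p + 2 * α ^ 2 * q + 6 * α - 2)) *
            (X ^ 2 - C (4 * α + α * p + α * q) * X
              + C (4 * α ^ 2 + 2 * α ^ 2 * p + 2 * α ^ 2 * q + 2 * α * p * q - p * q))
          - C (2 * (1 - α) ^ 2) * (X - C (2 * α)) *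
            (C ((p : ℝ) + q) * (X - C (2 * α)) - C (α * ((p : ℝ) + q) ^ 2)
              + C (2 * (p : ℝ) * q)))) ∧
    (2 ≤ r₁ →
      (Aalpha (rVertexJoin G₁ (completeBipartiteGraph (Fin p) (Fin q))) α).charpoly =
        (X - C (2 * α)) ^ (m₁ - n₁) *
        (X - C (α * (n₁ + p))) ^ (q - 1) *
        (X - C (α * (n₁ + q))) ^ (p - 1) *
        (∏ i ∈ Finset.univ.filter (fun i : Fin n₁ => i.val ≠ 0),
          (X ^ 2 - C (2 * α + α * r₁ + α * p + α * q + μ₁ i) * X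
            + C (2 * α ^ 2 * p + 2 * α ^ 2 * q + 3 * α * r₁ - r₁ + (3 * α - 1) * μ₁ i))) *
        ((X ^ 2 - C (2 * α + α * r₁ + α * p + α * q + r₁) * X
            + C (2 * α ^ 2 * p + 2 * α ^ 2 * q + 6 * α * r₁ - 2 * r₁)) *
            (X ^ 2 - C (2 * α * n₁ + α * p + α * q) * X
              + C (α ^ 2 * n₁ ^ 2 + α ^ 2 * n₁ * p + α ^ 2 * n₁ * q + 2 * α * p * q - p * q))
          - C (n₁ * (1 - α) ^ 2) * (X - C (2 * α)) *
            (C ((p : ℝ) + q) * (X - C (α * n₁)) - C (α * ((p : ℝ) + q) ^ 2)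
              + C (2 * (p : ℝ) * q)))) := by
  have hV := hconn₁.nonempty
  have : Nonempty (Fin p) := Fin.pos_iff_nonempty.1 hp
  have : Nonempty (Fin q) := Fin.pos_iff_nonempty.1 hq
  let i₀ : Fin n₁ := ⟨0, Fin.pos_iff_nonempty.2 hV⟩
  have hgreatest : IsGreatest (Set.range μ₁) (μ₁ i₀) :=
    ⟨⟨i₀, rfl⟩, Set.forall_mem_range.2 fun _ => hμ₁ (Fin.mk_le_of_le_val (Nat.zero_le _))⟩
  have herase : Finset.univ.erase i₀ = Finset.univ.filter fun i : Fin n₁ => i.val ≠ 0 := by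
    ext i
    simp [i₀, Fin.ext_iff]
  obtain ⟨hone, htwo⟩ := Aalpha_spectrum_rVertexJoin_completeBipartite_general (P := Fin p)
    (Q := Fin q) hreg₁ hμ₁ch (hgreatest.unique (isGreatest_range_of_charpoly_Aalpha hreg₁ hα hμ₁ch))
  rw [joinQuartic_one_two] at hone
  rw [joinQuartic, joinQuadratic_add_self] at htwo
  simp only [Fintype.card_fin, hm, herase, joinQuadratic_add] at hone htwo
  exact ⟨fun hr => hone hr hconn₁, htwo⟩
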